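/- There exist a positive integer f and a positive integer m₀ such that for every power of two m ≥ m₀ the following holds. Let d = ⌊log₂ log₂ m⌋ and w_i = m/2^i for 0 ≤ i ≤ d. Choose, for each i ∈ {1,…,d} and j ∈ {1,…,w_i}, a tuple S_{i,j} ∈ {1,…,w_{i−1}}^f independently and uniformly at random (with replacement). Then with probability at least 1 − 2^{−√m}, the following holds simultaneously for every i ∈ {1,…,d}: for every string y ∈ {0,1}^{w_{i−1}} with ȳ ≤ 7/10, the fraction of indices j ∈ {1,…,w_i} such that the fraction of ones among the f bits y(S_{i,j}(1)), …, y(S_{i,j}(f)) is at least 4/5, is at most 6/10. -/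

import Mathlib

/-!
The proof is a union bound over the levels `i` and, inside a level with `W = 2 w` inputs and `w`
gates, over the `2 ^ W` input strings; for a fixed string, the exponential-moment (Chernoff) bound
`chernoff_count` is applied twice.

* With base `u = 11 / 10`, it shows that a uniform `f`-tuple of positions in a string with at
  most `7 / 10` ones sees at least `4 / 5` ones with probability at most
  `((3 / 10 + 7 / 10 * u ^ 5) / u ^ 4) ^ f = (1427357 / 1464100) ^ f`, which is below `1 / 1024`
  once the constant `f` is large enough (`bad_tuple_card`).
* With base `u = 4`, so that `u ^ 5 = 1024` cancels this probability, it shows that at least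
  `3 / 5` of the `w` tuples are of this kind with probability at most `(2 / 4 ^ 3) ^ w = 2 ^ (-5 w)`.

The `2 ^ W = 2 ^ (2 w)` strings cost a factor that leaves failure probability `2 ^ (-3 w)` per
level (`level_card`). Since there are only `log₂ log₂ m` levels, every width satisfies
`w ≥ m / log₂ m ≥ √m`, and the sum over the levels is at most `2 ^ (-√m)`.
-/

open Finset

/-- The fraction of ones among the first `W` bits of `x : ℕ → Bool`. -/
noncomputable def fracOn (x : ℕ → Bool) (W : ℕ) : ℝ :=
  (∑ i ∈ Finset.range W, if x i then (1 : ℝ) else 0) / W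

/-- The fraction of ones among the `f` bits of `x` indexed by the tuple `T`. -/
noncomputable def tupleFrac (f : ℕ) (x : ℕ → Bool) (T : Fin f → ℕ) : ℝ :=
  (∑ a : Fin f, if x (T a) then (1 : ℝ) else 0) / f

open Classical in
/-- The probability of the event `E` under the uniform distribution on the finite type `Ω`. -/
noncomputable def prob {Ω : Type*} [Fintype Ω] (E : Ω → Prop) : ℝ :=
  ((Finset.univ.filter E).card : ℝ) / (Fintype.card Ω : ℝ)

open Classical in
/-- Chernoff bound in counting form: Markov's inequality applied to `u ^ (5 * X)`, where `X` is the
number of coordinates of a uniform `n`-tuple over `β` that satisfy `B`. The factor `5` makes the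
thresholds `a / 5` that occur (`4 / 5` and `3 / 5`) expressible with natural exponents. -/
theorem chernoff_count {β : Type*} [Fintype β] (B : β → Prop) [DecidablePred B]
    (n a : ℕ) (u : ℝ) (hu : 1 ≤ u) :
    ((univ.filter (fun S : Fin n → β =>
        a * n ≤ 5 * (univ.filter (fun j => B (S j))).card)).card : ℝ) * (u ^ a) ^ n ≤
      ((Fintype.card β : ℝ) + (u ^ 5 - 1) * ((univ.filter B).card : ℝ)) ^ n := by
  have hbase : ((Fintype.card β : ℝ) + (u ^ 5 - 1) * ((univ.filter B).card : ℝ))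
      = ∑ b : β, (if B b then u ^ 5 else 1) := by
    have h : ∀ b : β, (if B b then u ^ 5 else (1 : ℝ)) = 1 + (u ^ 5 - 1) * (if B b then 1 else 0) := by
      intro b; split_ifs <;> ring
    simp_rw [h]
    rw [Finset.sum_add_distrib, ← Finset.mul_sum, Finset.sum_boole]
    simp
  have hmoment : (∑ b : β, (if B b then u ^ 5 else (1 : ℝ))) ^ n
      = ∑ S : Fin n → β, u ^ (5 * (univ.filter (fun j => B (S j))).card) := by
    rw [Fintype.sum_pow]
    refine Finset.sum_congr rfl fun S _ => ?_
    rw [Finset.prod_ite, Finset.prod_const, Finset.prod_const_one, mul_one, pow_mul]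
  rw [hbase, hmoment, ← nsmul_eq_mul, ← Finset.sum_const]
  refine (Finset.sum_le_sum fun S hS => ?_).trans
    (Finset.sum_le_sum_of_subset_of_nonneg (Finset.filter_subset _ _) fun S _ _ => by positivity)
  rw [← pow_mul]
  exact pow_le_pow_right₀ hu (Finset.mem_filter.1 hS).2

open Classical in
/-- In a string with at most `7 / 10` ones, at most one `f`-tuple in `1024` sees at least `4 / 5`
ones. -/
theorem bad_tuple_card {f : ℕ} (hf : (1427357 / 1464100 : ℝ) ^ f < 1 / 1024) {W : ℕ} (z : Fin W → Bool)
    (hz : 10 * (univ.filter (fun k => z k = true)).card ≤ 7 * W) :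
    ((univ.filter (fun T : Fin f → Fin W =>
        4 * f ≤ 5 * (univ.filter (fun a => z (T a) = true)).card)).card : ℝ) * 1024 ≤
      (W : ℝ) ^ f := by
  have h := chernoff_count (fun k : Fin W => z k = true) f 4 (11 / 10) (by norm_num)
  have hz' : (10 : ℝ) * ((univ.filter (fun k => z k = true)).card : ℝ) ≤ 7 * W := by
    exact_mod_cast hz
  rw [Fintype.card_fin] at h
  have hb : ((W : ℝ) + ((11 / 10 : ℝ) ^ 5 - 1) * ((univ.filter (fun k => z k = true)).card : ℝ))
      ≤ (W : ℝ) * (1427357 / 1000000) := by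
    norm_num; linarith
  have h2 := h.trans (pow_le_pow_left₀ (by positivity) hb f)
  rw [mul_pow] at h2
  have hnum : (1427357 / 1000000 : ℝ) ^ f * 1024 ≤ (((11 / 10 : ℝ)) ^ 4) ^ f := by
    -- `1427357 / 10 ^ 6 = 3 / 10 + 7 / 10 * u ^ 5` and `1.4641 = u ^ 4` for `u = 11 / 10`.
    have hsplit : (1427357 / 1000000 : ℝ) ^ f
        = (1427357 / 1464100 : ℝ) ^ f * ((11 / 10 : ℝ) ^ 4) ^ f := by
      rw [← mul_pow]; norm_num
    have hu : (0 : ℝ) < ((11 / 10 : ℝ) ^ 4) ^ f := by positivity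
    rw [hsplit]
    nlinarith
  have hW : (0 : ℝ) ≤ (W : ℝ) ^ f := by positivity
  have hpos : (0 : ℝ) < (1427357 / 1000000 : ℝ) ^ f := by positivity
  refine le_of_mul_le_mul_right ?_ hpos
  refine le_trans ?_ h2
  rw [mul_assoc, mul_comm (1024 : ℝ)]
  exact mul_le_mul_of_nonneg_left hnum (by positivity)

open Classical in
/-- The failure probability of a single level with `w` gates and `2 * w` inputs is at most
`8 ^ (-w)`. -/
theorem level_card {f : ℕ} (hf : (1427357 / 1464100 : ℝ) ^ f < 1 / 1024) (w W : ℕ) (hW : W = 2 * w) :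
    ((univ.filter (fun S : Fin w → Fin f → Fin W => ∃ z : Fin W → Bool,
        10 * (univ.filter (fun k => z k = true)).card ≤ 7 * W ∧
        3 * w ≤ 5 * (univ.filter (fun j =>
          4 * f ≤ 5 * (univ.filter (fun a => z (S j a) = true)).card)).card)).card : ℝ) * 8 ^ w ≤
      (Fintype.card (Fin w → Fin f → Fin W) : ℝ) := by
  have hfix : ∀ z : Fin W → Bool, 10 * (univ.filter (fun k => z k = true)).card ≤ 7 * W →
      ((univ.filter (fun S : Fin w → Fin f → Fin W =>
        3 * w ≤ 5 * (univ.filter (fun j =>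
          4 * f ≤ 5 * (univ.filter (fun a => z (S j a) = true)).card)).card)).card : ℝ) * 32 ^ w
        ≤ (Fintype.card (Fin w → Fin f → Fin W) : ℝ) := by
    intro z hz
    have h := chernoff_count (fun T : Fin f → Fin W =>
        4 * f ≤ 5 * (univ.filter (fun a => z (T a) = true)).card) w 3 4 (by norm_num)
    have hq := bad_tuple_card hf z hz
    have hc : (Fintype.card (Fin f → Fin W) : ℝ) = (W : ℝ) ^ f := by simp
    have hc2 : (Fintype.card (Fin w → Fin f → Fin W) : ℝ) = ((W : ℝ) ^ f) ^ w := by simp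
    rw [hc] at h
    rw [hc2]
    generalize (W : ℝ) ^ f = N at *
    generalize hQ : ((univ.filter (fun T : Fin f → Fin W =>
        4 * f ≤ 5 * (univ.filter (fun a => z (T a) = true)).card)).card : ℝ) = Q at *
    have hQ0 : 0 ≤ Q := by rw [← hQ]; positivity
    have hb : N + ((4 : ℝ) ^ 5 - 1) * Q ≤ N * 2 := by norm_num; linarith
    have h2 := h.trans (pow_le_pow_left₀ (by norm_num; linarith) hb w)
    rw [mul_pow] at h2
    refine le_of_mul_le_mul_right ?_ (show (0 : ℝ) < 2 ^ w by positivity)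
    rw [mul_assoc, ← mul_pow]
    norm_num at h2 ⊢
    exact h2
  have hunion : (univ.filter (fun S : Fin w → Fin f → Fin W => ∃ z : Fin W → Bool,
        10 * (univ.filter (fun k => z k = true)).card ≤ 7 * W ∧
        3 * w ≤ 5 * (univ.filter (fun j =>
          4 * f ≤ 5 * (univ.filter (fun a => z (S j a) = true)).card)).card)) ⊆
      (univ.filter (fun z : Fin W → Bool =>
        10 * (univ.filter (fun k => z k = true)).card ≤ 7 * W)).biUnion
      (fun z => univ.filter (fun S : Fin w → Fin f → Fin W =>
        3 * w ≤ 5 * (univ.filter (fun j =>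
          4 * f ≤ 5 * (univ.filter (fun a => z (S j a) = true)).card)).card)) := by
    intro S hS
    obtain ⟨z, h1, h2⟩ := (Finset.mem_filter.1 hS).2
    exact Finset.mem_biUnion.2 ⟨z, Finset.mem_filter.2 ⟨Finset.mem_univ _, h1⟩,
      Finset.mem_filter.2 ⟨Finset.mem_univ _, h2⟩⟩
  have hcard := (Finset.card_le_card hunion).trans Finset.card_biUnion_le
  have hcardR := (Nat.cast_le (α := ℝ)).2 hcard
  rw [Nat.cast_sum] at hcardR
  -- The bound `32 ^ (-w)` for a fixed string absorbs the `2 ^ W = 4 ^ w` strings.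
  have h32 : (8 : ℝ) ^ w * 2 ^ W = 32 ^ w := by
    rw [hW, pow_mul, ← mul_pow]; norm_num
  have hstrings : (((univ.filter (fun z : Fin W → Bool =>
        10 * (univ.filter (fun k => z k = true)).card ≤ 7 * W)).card : ℕ) : ℝ) ≤ 2 ^ W := by
    have := Finset.card_filter_le (univ : Finset (Fin W → Bool)) (fun z =>
        10 * (univ.filter (fun k => z k = true)).card ≤ 7 * W)
    simp only [Finset.card_univ, Fintype.card_fun, Fintype.card_bool, Fintype.card_fin] at this
    exact_mod_cast this
  have hbound := hcardR.trans (Finset.sum_le_card_nsmul _ _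
    ((Fintype.card (Fin w → Fin f → Fin W) : ℝ) / 32 ^ w) fun z hz => by
      rw [le_div_iff₀ (by positivity)]
      exact hfix z (Finset.mem_filter.1 hz).2)
  rw [nsmul_eq_mul] at hbound
  have hbound2 := hbound.trans (mul_le_mul_of_nonneg_right hstrings (by positivity))
  calc _ ≤ (2 ^ W * ((Fintype.card (Fin w → Fin f → Fin W) : ℝ) / 32 ^ w)) * 8 ^ w :=
        mul_le_mul_of_nonneg_right hbound2 (by positivity)
    _ = _ := by
        rw [← h32]; field_simp

open Classical in
/-- Under the uniform distribution on a product, an event that depends on one coordinate only has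
the probability it has in that factor. -/
theorem prob_coord {ι : Type*} [Fintype ι] [DecidableEq ι] {β : ι → Type*}
    [∀ i, Fintype (β i)] [∀ i, Nonempty (β i)] (i : ι) (E : β i → Prop) :
    prob (Ω := ∀ i, β i) (fun ω => E (ω i)) = prob E := by
  have hset : (univ.filter (fun ω : ∀ i, β i => E (ω i))) =
      Fintype.piFinset (Function.update (fun k => (univ : Finset (β k))) i (univ.filter E)) := by
    ext ω
    simp only [Finset.mem_filter, Finset.mem_univ, true_and, Fintype.mem_piFinset]
    constructor
    · intro h k
      by_cases hk : k = i
      · subst hk; simpa using h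
      · simp [Function.update_of_ne hk]
    · intro h
      simpa using h i
  have hprod : ∏ k, (Function.update (fun k => (univ : Finset (β k))) i (univ.filter E) k).card
      = (univ.filter E).card * ∏ k ∈ univ.erase i, Fintype.card (β k) := by
    rw [← Finset.mul_prod_erase _ _ (Finset.mem_univ i)]
    congr 1
    · simp
    · refine Finset.prod_congr rfl fun k hk => ?_
      rw [Function.update_of_ne (Finset.ne_of_mem_erase hk), Finset.card_univ]
  unfold prob
  rw [hset, Fintype.card_piFinset, hprod, Fintype.card_pi,
    ← Finset.mul_prod_erase univ (fun k => Fintype.card (β k)) (Finset.mem_univ i)]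
  push_cast
  refine mul_div_mul_right _ _ ?_
  exact Finset.prod_ne_zero_iff.2 fun k _ => by exact_mod_cast Fintype.card_ne_zero

open Classical in
theorem prob_mono {Ω : Type*} [Fintype Ω] {E F : Ω → Prop} (h : ∀ ω, E ω → F ω) :
    prob E ≤ prob F := by
  unfold prob
  have := Finset.card_le_card (Finset.monotone_filter_right univ (p := E) (q := F)
    (fun ω _ => h ω))
  gcongr

open Classical in
/-- Union bound over the events `¬ G i`; nonemptiness excludes the junk value `prob E = 0 / 0`. -/
theorem one_sub_sum_le_prob {Ω ι : Type*} [Fintype Ω] [Nonempty Ω] [Fintype ι]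
    (G : ι → Ω → Prop) :
    1 - ∑ i, prob (fun ω => ¬ G i ω) ≤ prob (fun ω => ∀ i, G i ω) := by
  unfold prob
  have hc : (0 : ℝ) < Fintype.card Ω := by exact_mod_cast Fintype.card_pos
  have hcover : (univ : Finset Ω) ⊆ univ.filter (fun ω => ∀ i, G i ω) ∪
      univ.biUnion (fun i => univ.filter (fun ω => ¬ G i ω)) := by
    intro ω _
    by_cases h : ∀ i, G i ω
    · exact Finset.mem_union_left _ (by simpa using h)
    · exact Finset.mem_union_right _ (by simpa using h)
  have h1 := (Finset.card_le_card hcover).trans ((Finset.card_union_le _ _).trans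
    (Nat.add_le_add_left Finset.card_biUnion_le _))
  have h2 : (Fintype.card Ω : ℝ) ≤ ((univ.filter (fun ω => ∀ i, G i ω)).card : ℝ) +
      ∑ i, ((univ.filter (fun ω => ¬ G i ω)).card : ℝ) := by
    rw [Finset.card_univ] at h1
    exact_mod_cast h1
  rw [← Finset.sum_div, sub_le_iff_le_add, ← add_div, le_div_iff₀ hc, one_mul]
  convert h2; rfl

open Classical in
/-- The tuples `S` of a level with `W` inputs and `w` gates map every string with at most `7 / 10`
ones to one in which at most `6 / 10` of the gates see at least `4 / 5` ones. A string is encoded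
as `y : ℕ → Bool`, of which only the first `W` bits matter. -/
def LevelGood (f w W : ℕ) (S : Fin w → Fin f → Fin W) : Prop :=
  ∀ y : ℕ → Bool, fracOn y W ≤ 7 / 10 →
    ((univ.filter (fun j : Fin w =>
      (4 : ℝ) / 5 ≤ tupleFrac f y (fun a => (S j a : ℕ)))).card : ℝ) / (w : ℝ) ≤ 6 / 10

open Classical in
theorem level_prob {f : ℕ} (hf0 : 0 < f)
    (hf : (1427357 / 1464100 : ℝ) ^ f < 1 / 1024) (w W : ℕ) (hw : 0 < w) (hW : W = 2 * w) :
    prob (fun S : Fin w → Fin f → Fin W => ¬ LevelGood f w W S) ≤ 1 / 8 ^ w := by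
  have hW0 : 0 < W := by omega
  have hw' : (0 : ℝ) < w := by exact_mod_cast hw
  have hW' : (0 : ℝ) < W := by exact_mod_cast hW0
  have : Nonempty (Fin W) := ⟨⟨0, hW0⟩⟩
  refine (prob_mono (F := fun S : Fin w → Fin f → Fin W => ∃ z : Fin W → Bool,
        10 * (univ.filter (fun k => z k = true)).card ≤ 7 * W ∧
        3 * w ≤ 5 * (univ.filter (fun j =>
          4 * f ≤ 5 * (univ.filter (fun a => z (S j a) = true)).card)).card) ?_).trans ?_
  · intro S hS
    unfold LevelGood at hS
    push Not at hS
    obtain ⟨y, hy, hbad⟩ := hS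
    refine ⟨fun k => y k, ?_, ?_⟩
    · unfold fracOn at hy
      rw [Finset.sum_range, Finset.sum_boole, div_le_iff₀ hW'] at hy
      have : (10 : ℝ) * ((univ.filter (fun k : Fin W => y k = true)).card : ℝ) ≤ 7 * W := by
        linarith
      exact_mod_cast this
    · have hiff : ∀ j : Fin w, (4 : ℝ) / 5 ≤ tupleFrac f y (fun a => (S j a : ℕ)) ↔
          4 * f ≤ 5 * (univ.filter (fun a => y (S j a) = true)).card := by
        intro j
        unfold tupleFrac
        rw [Finset.sum_boole, le_div_iff₀ (by exact_mod_cast hf0), ← Nat.cast_le (α := ℝ)]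
        push_cast
        constructor <;> intro h <;> linarith
      simp_rw [hiff] at hbad
      rw [lt_div_iff₀ hw'] at hbad
      rw [← Nat.cast_le (α := ℝ)]
      push_cast
      linarith
  · unfold prob
    rw [div_le_div_iff₀ (by exact_mod_cast Fintype.card_pos) (by positivity), one_mul]
    convert level_card hf w W hW; rfl

theorem prob_levels {f : ℕ} (hf0 : 0 < f) (hf : (1427357 / 1464100 : ℝ) ^ f < 1 / 1024)
    {ι : Type*} [Fintype ι] [DecidableEq ι] (w W : ι → ℕ) (hw : ∀ i, 0 < w i)
    (hW : ∀ i, W i = 2 * w i) :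
    1 - ∑ i, (1 : ℝ) / 8 ^ w i ≤
      prob (Ω := (i : ι) → Fin (w i) → Fin f → Fin (W i))
        (fun ω => ∀ i, LevelGood f (w i) (W i) (ω i)) := by
  have hne : ∀ i, Nonempty (Fin (W i)) := fun i =>
    ⟨⟨0, by have := hw i; rw [hW i]; omega⟩⟩
  refine le_trans (sub_le_sub_left (Finset.sum_le_sum fun i _ => ?_) 1) (one_sub_sum_le_prob _)
  refine le_trans (le_of_eq ?_) (level_prob hf0 hf (w i) (W i) (hw i) (hW i))
  exact prob_coord (β := fun i => Fin (w i) → Fin f → Fin (W i)) i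
    (fun S => ¬ LevelGood f (w i) (W i) S)

theorem sq_le_two_pow (e : ℕ) (he : 4 ≤ e) : e ^ 2 ≤ 2 ^ e := by
  induction e, he using Nat.le_induction with
  | base => norm_num
  | succ n hn ih => rw [pow_succ 2 n]; nlinarith

open Classical in
theorem stmt_8 :
    ∃ f m₀ : ℕ, 0 < f ∧ 0 < m₀ ∧
      ∀ m : ℕ, (∃ e : ℕ, m = 2 ^ e) → m₀ ≤ m →
        1 - (2 : ℝ) ^ (-Real.sqrt (m : ℝ)) ≤
          prob (Ω := (i : Fin (Nat.log 2 (Nat.log 2 m))) →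
              Fin (m / 2 ^ ((i : ℕ) + 1)) → Fin f → Fin (m / 2 ^ (i : ℕ)))
            (fun ω =>
              ∀ i : Fin (Nat.log 2 (Nat.log 2 m)),
                ∀ y : ℕ → Bool, fracOn y (m / 2 ^ (i : ℕ)) ≤ 7 / 10 →
                  ((univ.filter (fun j : Fin (m / 2 ^ ((i : ℕ) + 1)) =>
                      (4 : ℝ) / 5 ≤ tupleFrac f y (fun a => (ω i j a : ℕ)))).card : ℝ)
                    / ((m / 2 ^ ((i : ℕ) + 1) : ℕ) : ℝ) ≤ 6 / 10) := by
  obtain ⟨f, hf⟩ := exists_pow_lt_of_lt_one (show (0 : ℝ) < 1 / 1024 by norm_num)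
    (show (1427357 / 1464100 : ℝ) < 1 by norm_num)
  have hf0 : 0 < f := by
    rcases Nat.eq_zero_or_pos f with rfl | h
    · norm_num at hf
    · exact h
  refine ⟨f, 16, hf0, by norm_num, ?_⟩
  rintro m ⟨e, rfl⟩ hm
  have he : 4 ≤ e := (Nat.pow_le_pow_iff_right (a := 2) (by norm_num)).1 (by simpa using hm)
  have hlog : Nat.log 2 (2 ^ e) = e := Nat.log_pow (by norm_num) e
  generalize hd : Nat.log 2 (Nat.log 2 (2 ^ e)) = d
  rw [hlog] at hd
  have hde : d ≤ e := hd ▸ Nat.log_le_self 2 e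
  have h2d : 2 ^ d ≤ e := hd ▸ Nat.pow_log_le_self 2 (by omega)
  set r : ℝ := Real.sqrt ((2 ^ e : ℕ) : ℝ) with hr
  have her : (e : ℝ) ≤ r := by
    refine Real.le_sqrt_of_sq_le ?_
    exact_mod_cast sq_le_two_pow e he
  have hrr : r * r = (2 : ℝ) ^ e := by
    rw [hr, Real.mul_self_sqrt (by positivity)]; push_cast; rfl
  have hr0 : 0 < r := lt_of_lt_of_le (by exact_mod_cast (by omega : 0 < e)) her
  have hdiv : ∀ i : ℕ, i ≤ d → 2 ^ e / 2 ^ i = 2 ^ (e - i) := fun i hi =>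
    Nat.pow_div (hi.trans hde) (by norm_num)
  -- Every level has width at least `√m`, because `w * e ≥ w * 2 ^ d ≥ 2 ^ e = √m * √m` and `e ≤ √m`.
  have hwidth : ∀ i : Fin d, r ≤ ((2 ^ e / 2 ^ ((i : ℕ) + 1) : ℕ) : ℝ) := by
    intro i
    have hi := i.2
    rw [hdiv _ i.2]
    have h1 : 2 ^ e ≤ 2 ^ (e - (i + 1)) * e :=
      calc 2 ^ e ≤ 2 ^ (e - (i + 1)) * 2 ^ d := by
            rw [← pow_add]; exact Nat.pow_le_pow_right (by norm_num) (by omega)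
        _ ≤ _ := Nat.mul_le_mul_left _ h2d
    have h2 : (2 : ℝ) ^ e ≤ ((2 ^ (e - (i + 1)) : ℕ) : ℝ) * e := by exact_mod_cast h1
    refine le_of_mul_le_mul_right ?_ hr0
    rw [hrr]
    exact h2.trans (mul_le_mul_of_nonneg_left her (by positivity))
  have hterm : ∀ i : Fin d,
      (1 : ℝ) / 8 ^ (2 ^ e / 2 ^ ((i : ℕ) + 1)) ≤ (2 : ℝ) ^ (-(3 * r)) := by
    intro i
    rw [show (8 : ℝ) = 2 ^ 3 by norm_num, ← pow_mul, one_div, ← Real.rpow_natCast,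
      ← Real.rpow_neg (by norm_num)]
    refine Real.rpow_le_rpow_of_exponent_le (by norm_num) ?_
    push_cast
    have := hwidth i
    linarith
  have hdr : (d : ℝ) ≤ (2 : ℝ) ^ r := by
    have h1 : (d : ℝ) ≤ (2 : ℝ) ^ d := by exact_mod_cast (Nat.lt_two_pow_self).le
    rw [← Real.rpow_natCast] at h1
    exact h1.trans (Real.rpow_le_rpow_of_exponent_le (by norm_num)
      (le_trans (by exact_mod_cast hde) her))
  have hsum : (d : ℝ) * (2 : ℝ) ^ (-(3 * r)) ≤ (2 : ℝ) ^ (-r) := by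
    refine (mul_le_mul_of_nonneg_right hdr (by positivity)).trans ?_
    rw [← Real.rpow_add (by norm_num)]
    exact Real.rpow_le_rpow_of_exponent_le (by norm_num) (by linarith)
  refine le_trans ?_ (prob_levels hf0 hf (fun i : Fin d => 2 ^ e / 2 ^ ((i : ℕ) + 1))
    (fun i : Fin d => 2 ^ e / 2 ^ (i : ℕ)) (fun i => ?_) (fun i => ?_))
  · refine sub_le_sub_left (le_trans (Finset.sum_le_card_nsmul _ _ ((2 : ℝ) ^ (-(3 * r)))
      fun i _ => hterm i) ?_) 1
    simpa using hsum
  · simp only [hdiv _ i.2]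
    positivity
  · have hi := i.2
    simp only [hdiv _ i.2, hdiv _ i.2.le]
    rw [← pow_succ']
    congr 1; omega
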